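/- Let λ be an infinite cardinal and let Q_λ = (⊕_λ ℚ) ⊕ ⊕_{p prime} (⊕_λ ℤ(p^∞)). If D is a divisible abelian group of cardinality λ and there exists an injective group homomorphism from Q_λ into D, then D is isomorphic to Q_λ. -/

import Mathlib

universe u

/-- The group `ℚ/ℤ`. -/
abbrev RatCircle : Type := ℚ ⧸ AddSubgroup.zmultiples (1 : ℚ)

/-- The Prüfer `p`-group `ℤ(p^∞)`: the subgroup of `ℚ/ℤ` of elements annihilated by a
power of `p` (its `p`-primary component). -/
def Prufer (p : Nat.Primes) : AddSubgroup RatCircle :=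
  haveI : Fact (Nat.Prime (p : ℕ)) := ⟨p.2⟩
  AddCommGroup.primaryComponent RatCircle (p : ℕ)

/-- `Q_λ = (⊕_λ ℚ) ⊕ ⊕_{p prime} (⊕_λ ℤ(p^∞))`. -/
abbrev QLambda (lam : Cardinal.{u}) : Type u :=
  (DirectSum lam.out fun _ => ℚ) ×
    DirectSum Nat.Primes fun p => DirectSum lam.out fun _ => ↥(Prufer p)

/-!
Bumby's theorem (the Cantor–Schröder–Bernstein theorem for injective modules) reduces the claim to
embedding `D` into `Q_λ`, since divisible abelian groups are exactly the injective `ℤ`-modules.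

For Bumby's theorem over a Noetherian ring, let `A` and `B` be injective modules embedding in each
other. Then `A ≅ B × C`, and `A ↪ B` becomes an injection `ψ : B × C → B`. With `φ b = ψ (b, 0)`,
the images of `ψ (0, C)` under the powers of `φ` are independent, so they embed `⨁_ℕ C` in `B`. As
`⨁_ℕ C` is injective, it is a direct summand of `B`, and it absorbs one more copy of `C`: hence
`A ≅ B × C ≅ B`.

A group `M` of cardinality at most `λ` embeds in `Q_λ` because it suffices to find a map to `⨁_λ ℚ`
whose kernel is torsion, namely one factoring through `M → ℚ ⊗ M`, and for each `p` a map to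
`⨁_λ ℤ(p^∞)` injective on the socle `M[p]`, namely an extension of an `𝔽_p`-linear embedding of
`M[p]` in `⨁_λ 𝔽_p`.
-/

open DirectSum Function

section Injective

variable {R : Type*} [Ring R] {A B C : Type*} [AddCommGroup A] [Module R A] [AddCommGroup B]
  [Module R B] [AddCommGroup C] [Module R C] {ι : Type*} {M : ι → Type*}
  [∀ i, AddCommGroup (M i)] [∀ i, Module R (M i)]

theorem baer_of_leftInverse (hB : Module.Baer R B) {i : A →ₗ[R] B} {r : B →ₗ[R] A}
    (hri : LeftInverse r i) : Module.Baer R A := fun I g ↦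
  have ⟨g', hg'⟩ := hB I (i ∘ₗ g)
  ⟨r ∘ₗ g', fun x hx ↦ by rw [LinearMap.comp_apply, hg' x hx]; exact hri _⟩

theorem baer_prod (hA : Module.Baer R A) (hB : Module.Baer R B) : Module.Baer R (A × B) :=
  fun I g ↦
  have ⟨g₁, hg₁⟩ := hA I (.fst R A B ∘ₗ g)
  have ⟨g₂, hg₂⟩ := hB I (.snd R A B ∘ₗ g)
  ⟨g₁.prod g₂, fun x hx ↦ Prod.ext (hg₁ x hx) (hg₂ x hx)⟩

theorem exists_finset_forall_apply_eq_zero_of_fg {N : Submodule R (⨁ i, M i)} (hN : N.FG) :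
    ∃ T : Finset ι, ∀ x ∈ N, ∀ i ∉ T, x i = 0 := by
  classical
  obtain ⟨s, rfl⟩ := hN
  refine ⟨s.biUnion DFinsupp.support, fun x hx i hi ↦ ?_⟩
  induction hx using Submodule.span_induction with
  | mem y hy =>
    by_contra hyi
    exact hi (Finset.mem_biUnion.mpr ⟨y, hy, DFinsupp.mem_support_iff.mpr hyi⟩)
  | zero => rfl
  | add y z _ _ hy hz => rw [DirectSum.add_apply, hy, hz, add_zero]
  | smul a y _ hy => rw [DirectSum.smul_apply, hy, smul_zero]

theorem baer_directSum [IsNoetherianRing R] (hM : ∀ i, Module.Baer R (M i)) :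
    Module.Baer R (⨁ i, M i) := by
  classical
  intro I g
  obtain ⟨T, hT⟩ := exists_finset_forall_apply_eq_zero_of_fg
    (Module.Finite.iff_fg.mp (Module.Finite.range g))
  choose g' hg' using fun i ↦ hM i I (component R ι M i ∘ₗ g)
  refine ⟨∑ i ∈ T, lof R ι M i ∘ₗ g' i, fun x hx ↦ DFinsupp.ext fun i ↦ ?_⟩
  have hsum : (∑ k ∈ T, lof R ι M k ∘ₗ g' k) x i = if i ∈ T then g' i x else 0 := by
    simp [lof_eq_of, of_apply]
  rw [hsum]
  split_ifs with hi
  · exact hg' i x hx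
  · exact (hT _ (LinearMap.mem_range_self g _) i hi).symm

theorem baer_finsupp [IsNoetherianRing R] (hA : Module.Baer R A) : Module.Baer R (ι →₀ A) := by
  classical
  exact (baer_directSum fun _ : ι ↦ hA).of_equiv (finsuppLEquivDirectSum R A ι).symm

theorem nonempty_linearEquiv_prod_quotient_range (hA : Module.Baer R A) {f : A →ₗ[R] B}
    (hf : Injective f) : Nonempty (B ≃ₗ[R] A × B ⧸ f.range) := by
  obtain ⟨r, hr⟩ := hA.extension_property f hf .id
  exact ⟨(Exact.splitInjectiveEquiv (LinearMap.exact_map_mkQ_range f) f.range.mkQ_surjective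
    ⟨r, hr⟩).1⟩

variable (R C) in
theorem nonempty_finsupp_nat_prod_linearEquiv : Nonempty (((ℕ →₀ C) × C) ≃ₗ[R] (ℕ →₀ C)) :=
  ⟨LinearEquiv.prodCongr (.refl R _) (Finsupp.uniqueLinearEquiv R C PUnit.unit.{1}).symm ≪≫ₗ
    (Finsupp.sumFinsuppLEquivProdFinsupp R).symm ≪≫ₗ
    Finsupp.domLCongr Equiv.natSumPUnitEquivNat⟩

/-- The map `⨁_ℕ C → B` obtained by iterating `ψ : B × C → B`: it sends `c` in degree `n` to
`φⁿ (ψ (0, c))`, where `φ b = ψ (b, 0)`. -/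
noncomputable def iterateSum (ψ : B × C →ₗ[R] B) : (ℕ →₀ C) →ₗ[R] B :=
  Finsupp.lsum ℕ fun n ↦ ((ψ ∘ₗ .inl R B C) ^ n) ∘ₗ ψ ∘ₗ .inr R B C

theorem iterateSum_single (ψ : B × C →ₗ[R] B) (n : ℕ) (c : C) :
    iterateSum ψ (.single n c) = ((ψ ∘ₗ .inl R B C) ^ n) (ψ (0, c)) :=
  Finsupp.lsum_single ..

theorem iterateSum_eq_apply_shift (ψ : B × C →ₗ[R] B) (x : ℕ →₀ C) :
    iterateSum ψ x =
      ψ (iterateSum ψ (x.comapDomain Nat.succ Nat.succ_injective.injOn), x 0) := by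
  let shift : (ℕ →₀ C) →ₗ[R] (ℕ →₀ C) := Finsupp.lcomapDomain Nat.succ Nat.succ_injective
  suffices iterateSum ψ = ψ ∘ₗ (iterateSum ψ ∘ₗ shift).prod (Finsupp.lapply 0) from
    LinearMap.congr_fun this x
  ext n c
  cases n with
  | zero =>
    have hshift : shift (.single 0 c) = 0 := by
      ext m
      simp [shift, Finsupp.lcomapDomain]
    simp [iterateSum_single, hshift]
  | succ n =>
    have hshift : shift (.single (n + 1) c) = .single n c := Finsupp.comapDomain_single ..
    simp [iterateSum_single, hshift, pow_succ']

theorem iterateSum_injective {ψ : B × C →ₗ[R] B} (hψ : Injective ψ) :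
    Injective (iterateSum ψ) := by
  refine (injective_iff_map_eq_zero _).mpr fun x hx ↦ Finsupp.ext fun n ↦ ?_
  induction n generalizing x with
  | zero =>
    rw [iterateSum_eq_apply_shift, map_eq_zero_iff ψ hψ] at hx
    exact congrArg Prod.snd hx
  | succ _ ih =>
    rw [iterateSum_eq_apply_shift, map_eq_zero_iff ψ hψ] at hx
    exact ih _ (congrArg Prod.fst hx)

theorem nonempty_prod_linearEquiv_of_injective [IsNoetherianRing R] (hC : Module.Baer R C)
    {ψ : B × C →ₗ[R] B} (hψ : Injective ψ) : Nonempty ((B × C) ≃ₗ[R] B) := by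
  obtain ⟨split⟩ :=
    nonempty_linearEquiv_prod_quotient_range (baer_finsupp hC) (iterateSum_injective hψ)
  obtain ⟨absorb⟩ := nonempty_finsupp_nat_prod_linearEquiv R C
  let splitComm := split ≪≫ₗ LinearEquiv.prodComm ..
  exact ⟨splitComm.prodCongr (.refl R C) ≪≫ₗ LinearEquiv.prodAssoc .. ≪≫ₗ
    LinearEquiv.prodCongr (.refl R _) absorb ≪≫ₗ splitComm.symm⟩

theorem nonempty_linearEquiv_of_injective_of_injective [IsNoetherianRing R]
    (hA : Module.Baer R A) (hB : Module.Baer R B) {f : A →ₗ[R] B} (hf : Injective f)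
    {g : B →ₗ[R] A} (hg : Injective g) : Nonempty (A ≃ₗ[R] B) := by
  obtain ⟨e⟩ := nonempty_linearEquiv_prod_quotient_range hB hg
  have hC : Module.Baer R (A ⧸ g.range) :=
    baer_of_leftInverse hA (i := e.symm.toLinearMap ∘ₗ .inr R _ _)
      (r := .snd R _ _ ∘ₗ e.toLinearMap) fun c ↦ by simp
  obtain ⟨e'⟩ := nonempty_prod_linearEquiv_of_injective hC (ψ := f ∘ₗ e.symm.toLinearMap)
    (hf.comp e.symm.injective)
  exact ⟨e ≪≫ₗ e'⟩

end Injective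

section Embedding

theorem exists_injective_finsupp_of_span_eq_top {K V α ι : Type*} [DivisionRing K]
    [AddCommGroup V] [Module K V] {v : α → V} (hv : Submodule.span K (Set.range v) = ⊤)
    (j : α ↪ ι) : ∃ g : V →ₗ[K] (ι →₀ K), Injective g := by
  let b := Module.Basis.ofSpan hv.ge
  have hb := Module.Basis.range_ofSpan hv.ge ▸ Module.Basis.ofSpan_subset hv.ge
  let k := (Set.embeddingOfSubset _ _ hb).trans
    ((Embedding.ofSurjective _ Set.rangeFactorization_surjective).trans j)
  exact ⟨Finsupp.lmapDomain K K k ∘ₗ b.repr.toLinearMap,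
    (Finsupp.mapDomain_injective k.injective).comp b.repr.injective⟩

variable {R M ι : Type*} [CommRing R] [AddCommGroup M] [Module R M]

theorem exists_linearMap_ker_le_torsion (K : Type*) [Field K] [Algebra R K] [IsFractionRing R K]
    (j : M ↪ ι) : ∃ h : M →ₗ[R] ⨁ _ : ι, K, h.ker ≤ Submodule.torsion R M := by
  classical
  let toTensor : M →ₗ[R] TensorProduct R K M := TensorProduct.mk R K M 1
  have hspan : Submodule.span K (Set.range toTensor) = ⊤ := by
    rw [← LinearMap.coe_range, LinearMap.range_eq_map, ← Submodule.baseChange_eq_span,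
      Submodule.baseChange_top]
  obtain ⟨g, hg⟩ := exists_injective_finsupp_of_span_eq_top hspan j
  refine ⟨(finsuppLEquivDirectSum R K ι).toLinearMap ∘ₗ g.restrictScalars R ∘ₗ toTensor,
    fun x hx ↦ ?_⟩
  have hx' : toTensor x = 0 := by simpa [map_eq_zero_iff g hg] using hx
  exact (Submodule.mem_torsion_iff x).mpr
    ((IsLocalizedModule.eq_zero_iff (nonZeroDivisors R) toTensor).mp hx')

theorem exists_linearMap_disjoint_torsionBySet_ker [IsNoetherianRing R] {E : Type*}
    [AddCommGroup E] [Module R E] (hE : Module.Baer R E) {I : Ideal R} [I.IsMaximal] {e : E}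
    (he : Ideal.torsionOf R E e = I) (j : M ↪ ι) :
    ∃ h : M →ₗ[R] ⨁ _ : ι, E, Disjoint (Submodule.torsionBySet R M I) h.ker := by
  classical
  let := Ideal.Quotient.field I
  let S := Submodule.torsionBySet R M I
  obtain ⟨g, hg⟩ := exists_injective_finsupp_of_span_eq_top (K := R ⧸ I) (v := (id : S → S))
    (by simp) ((Embedding.subtype _).trans j)
  let k : (R ⧸ I) →ₗ[R] E := Submodule.subtype _ ∘ₗ (Submodule.quotEquivOfEq _ _ he.symm ≪≫ₗ
    Ideal.quotTorsionOfEquivSpanSingleton R E e).toLinearMap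
  have hk : Injective k := Subtype.val_injective.comp (LinearEquiv.injective _)
  let socleMap : S →ₗ[R] ⨁ _ : ι, E := (finsuppLEquivDirectSum R E ι).toLinearMap ∘ₗ
    Finsupp.mapRange.linearMap k ∘ₗ g.restrictScalars R
  have hsocleMap : Injective socleMap := (finsuppLEquivDirectSum R E ι).injective.comp
    ((Finsupp.mapRange_injective k (map_zero k) hk).comp hg)
  obtain ⟨h, hh⟩ := (baer_directSum fun _ : ι ↦ hE).extension_property S.subtype
    S.injective_subtype socleMap
  exact ⟨h, LinearMap.injective_domRestrict_iff.mp (hh ▸ hsocleMap : Injective (h ∘ₗ S.subtype))⟩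

theorem exists_linearMap_directSum_eq [IsNoetherianRing R] {P : Type*} {T : P → Type*}
    [∀ i, AddCommGroup (T i)] [∀ i, Module R (T i)] (hT : ∀ i, Module.Baer R (T i))
    (h : ∀ i, M →ₗ[R] T i) :
    ∃ H : M →ₗ[R] ⨁ i, T i, ∀ x y, (∀ i, h i x = y i) → H x = y := by
  -- `H` is `M → ∏ T i` followed by a retraction of `∏ T i` onto its injective submodule `⨁ T i`.
  obtain ⟨r, hr⟩ := (baer_directSum hT).extension_property (coeFnLinearMap R)
    DFunLike.coe_injective .id
  refine ⟨r ∘ₗ LinearMap.pi h, fun x y hxy ↦ ?_⟩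
  rw [LinearMap.comp_apply, show LinearMap.pi h x = coeFnLinearMap R y from funext hxy]
  exact LinearMap.congr_fun hr y

theorem eq_bot_of_le_torsion_of_disjoint_torsionBySet [IsNoetherianRing R] [Nontrivial R]
    {N : Submodule R M} (hN : N ≤ Submodule.torsion R M)
    (hdisj : ∀ J : Ideal R, J.IsPrime → J ≠ ⊥ → Disjoint (Submodule.torsionBySet R M J) N) :
    N = ⊥ := by
  by_contra hne
  have := Submodule.nontrivial_iff_ne_bot.mpr hne
  obtain ⟨J, hJ⟩ := associatedPrimes.nonempty R N
  obtain ⟨hJprime, x, hx⟩ := isAssociatedPrime_iff.mp hJ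
  have mem_J (a : R) : a ∈ J ↔ a • (x : M) = 0 := by
    rw [hx, Submodule.mem_colon_singleton, Submodule.mem_bot, Subtype.ext_iff]
    rfl
  have hJ₀ : J ≠ ⊥ := by
    obtain ⟨a, ha⟩ := (Submodule.mem_torsion_iff _).mp (hN x.2)
    rintro rfl
    exact nonZeroDivisors.coe_ne_zero a ((mem_J a).mpr ha)
  have hx₀ : (x : M) = 0 := Submodule.disjoint_def.mp (hdisj J hJprime hJ₀) x
    ((Submodule.mem_torsionBySet_iff _ _).mpr fun a ↦ (mem_J a).mp a.2) x.2
  exact hJprime.ne_top (J.eq_top_iff_one.mpr ((mem_J 1).mpr (by rw [hx₀, smul_zero])))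

theorem torsionBySet_directSum_eq_bot {E : ι → Type*} [∀ i, AddCommGroup (E i)]
    [∀ i, Module R (E i)] {s : Set R} (hE : ∀ i, Submodule.torsionBySet R (E i) s = ⊥) :
    Submodule.torsionBySet R (⨁ i, E i) s = ⊥ := by
  refine (Submodule.eq_bot_iff _).mpr fun x hx ↦ DFinsupp.ext fun i ↦ ?_
  refine (Submodule.eq_bot_iff _).mp (hE i) _ ((Submodule.mem_torsionBySet_iff _ _).mpr fun a ↦ ?_)
  exact DFunLike.congr_fun ((Submodule.mem_torsionBySet_iff _ _).mp hx a) i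

theorem exists_injective_linearMap_prod_directSum [IsNoetherianRing R] (K : Type*) [Field K]
    [Algebra R K] [IsFractionRing R K] {P : Type*} {I : P → Ideal R}
    (hmax : ∀ i, (I i).IsMaximal) (hprime : ∀ J : Ideal R, J.IsPrime → J ≠ ⊥ → ∃ i, I i = J)
    {E : P → Type*} [∀ i, AddCommGroup (E i)] [∀ i, Module R (E i)]
    (hE : ∀ i, Module.Baer R (E i)) {e : ∀ i, E i} (he : ∀ i, Ideal.torsionOf R (E i) (e i) = I i)
    (htors : ∀ i k, i ≠ k → Submodule.torsionBySet R (E k) (I i) = ⊥) (j : M ↪ ι) :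
    ∃ f : M →ₗ[R] (⨁ _ : ι, K) × ⨁ i, ⨁ _ : ι, E i, Injective f := by
  classical
  have := (algebraMap R K).domain_nontrivial
  obtain ⟨h₀, hh₀⟩ := exists_linearMap_ker_le_torsion (R := R) K j
  choose h hh using fun i ↦ exists_linearMap_disjoint_torsionBySet_ker (hE i) (he i) j
  obtain ⟨H, hH⟩ := exists_linearMap_directSum_eq (fun i ↦ baer_directSum fun _ : ι ↦ hE i) h
  refine ⟨h₀.prod H, LinearMap.ker_eq_bot.mp ?_⟩
  rw [LinearMap.ker_prod]
  refine eq_bot_of_le_torsion_of_disjoint_torsionBySet (inf_le_left.trans hh₀) fun J hJ hJ₀ ↦ ?_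
  obtain ⟨i, rfl⟩ := hprime J hJ hJ₀
  refine Submodule.disjoint_def.mpr fun x hxI hx ↦ ?_
  have hhx (k : P) (hik : i ≠ k) : h k x = 0 := by
    refine (Submodule.eq_bot_iff _).mp (torsionBySet_directSum_eq_bot fun _ ↦ htors i k hik) _
      ((Submodule.mem_torsionBySet_iff _ _).mpr fun a ↦ ?_)
    rw [← map_smul, (Submodule.mem_torsionBySet_iff _ _).mp hxI, map_zero]
  have hHx : H x = of _ i (h i x) := hH x _ fun k ↦ by
    obtain rfl | hik := eq_or_ne i k
    · rw [of_eq_same]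
    · rw [of_eq_of_ne _ _ _ hik.symm, hhx k hik]
  have hhix : h i x = 0 := of_injective i (hHx.symm.trans (hx.2.trans (map_zero _).symm))
  exact Submodule.disjoint_def.mp (hh i) x hxI hhix

end Embedding

section Divisible

variable {A : Type*} [AddCommGroup A]

theorem baer_int_of_nsmul_surjective (hA : ∀ n : ℕ, n ≠ 0 → Surjective fun x : A ↦ n • x) :
    Module.Baer ℤ A :=
  let := divisibleByOfSMulRightSurj A ℕ fun {n} hn ↦ hA n hn
  let := AddGroup.divisibleByIntOfDivisibleByNat A
  Module.Baer.of_divisible A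

theorem nsmul_surjective_primaryComponent {p : ℕ} [hp : Fact p.Prime]
    (hA : ∀ n : ℕ, n ≠ 0 → Surjective fun x : A ↦ n • x) {n : ℕ} (hn : n ≠ 0) :
    Surjective fun x : AddCommGroup.primaryComponent A p ↦ n • x := by
  rintro ⟨x, k, hx⟩
  obtain ⟨a, m, hpm, rfl⟩ := Nat.exists_eq_pow_mul_and_not_dvd hn p hp.out.ne_one
  obtain ⟨z, rfl : p ^ a • z = x⟩ := hA (p ^ a) (pow_ne_zero _ hp.out.ne_zero) x
  have hz : p ^ (k + a) • z = 0 := by rw [pow_add, mul_smul, hx]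
  have hcop : m.Coprime (addOrderOf z) := .of_dvd_right (addOrderOf_dvd_of_nsmul_eq_zero hz)
    ((hp.out.coprime_iff_not_dvd.mpr hpm).symm.pow_right _)
  obtain ⟨u, hu⟩ := exists_nsmul_eq_self_of_coprime hcop
  refine ⟨⟨u • z, k + a, by rw [smul_comm, hz, smul_zero]⟩, Subtype.ext ?_⟩
  change (p ^ a * m) • u • z = p ^ a • z
  rw [mul_smul, smul_comm m u, hu]

theorem torsionBySet_span_primaryComponent_eq_bot {p q : ℕ} [Fact p.Prime] [Fact q.Prime]
    (hpq : p ≠ q) :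
    Submodule.torsionBySet ℤ (AddCommGroup.primaryComponent A q) (Ideal.span {(p : ℤ)}) = ⊥ := by
  rw [Submodule.torsionBySet_span_singleton_eq, Submodule.eq_bot_iff]
  intro x hx
  have hpx : (x : A) ∈ AddCommMonoid.primaryComponent A p :=
    ⟨1, by simpa using congrArg Subtype.val hx⟩
  exact Subtype.ext <| AddSubmonoid.disjoint_def.mp
    (AddCommMonoid.primaryComponent.disjoint hpq) hpx x.2

theorem torsionOf_int_eq_span_addOrderOf (x : A) :
    Ideal.torsionOf ℤ A x = Ideal.span {(addOrderOf x : ℤ)} := by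
  ext a
  rw [Ideal.mem_torsionOf_iff, Ideal.mem_span_singleton, addOrderOf_dvd_iff_zsmul_eq_zero]

theorem nsmul_surjective_ratCircle {n : ℕ} (hn : n ≠ 0) :
    Surjective fun x : RatCircle ↦ n • x :=
  let := AddGroup.divisibleByNatOfDivisibleByInt ℚ
  DivisibleBy.surjective_smul RatCircle ℕ hn

theorem baer_prufer (p : Nat.Primes) : Module.Baer ℤ (Prufer p) :=
  have : Fact (p : ℕ).Prime := ⟨p.2⟩
  baer_int_of_nsmul_surjective fun _ ↦
    nsmul_surjective_primaryComponent fun _ ↦ nsmul_surjective_ratCircle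

theorem torsionBySet_span_prufer_eq_bot {p q : Nat.Primes} (hpq : p ≠ q) :
    Submodule.torsionBySet ℤ (Prufer q) (Ideal.span {((p : ℕ) : ℤ)}) = ⊥ :=
  have : Fact (p : ℕ).Prime := ⟨p.2⟩
  have : Fact (q : ℕ).Prime := ⟨q.2⟩
  torsionBySet_span_primaryComponent_eq_bot (Nat.Primes.coe_nat_injective.ne hpq)

theorem exists_torsionOf_prufer_eq_span (p : Nat.Primes) :
    ∃ e : Prufer p, Ideal.torsionOf ℤ (Prufer p) e = Ideal.span {((p : ℕ) : ℤ)} := by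
  let e : RatCircle := ((1 / (p : ℕ) : ℚ) : AddCircle (1 : ℚ))
  have horder : addOrderOf e = p := AddCircle.addOrderOf_period_div p.2.pos
  have hmem : e ∈ Prufer p :=
    ⟨1, by rw [pow_one]; exact addOrderOf_dvd_iff_nsmul_eq_zero.mp horder.dvd⟩
  exact ⟨⟨e, hmem⟩, by rw [torsionOf_int_eq_span_addOrderOf, AddSubgroup.addOrderOf_mk, horder]⟩

theorem baer_QLambda (lam : Cardinal.{u}) : Module.Baer ℤ (QLambda lam) :=
  baer_prod (baer_directSum fun _ ↦ Module.Baer.of_divisible ℚ)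
    (baer_directSum fun p ↦ baer_directSum fun _ ↦ baer_prufer p)

theorem exists_injective_linearMap_QLambda {lam : Cardinal.{u}} (j : A ↪ lam.out) :
    ∃ g : A →ₗ[ℤ] QLambda lam, Injective g := by
  choose e he using exists_torsionOf_prufer_eq_span
  refine exists_injective_linearMap_prod_directSum ℚ (P := Nat.Primes)
    (fun p ↦ have : Fact (p : ℕ).Prime := ⟨p.2⟩; Int.ideal_span_isMaximal_of_prime p)
    (fun J hJ hJ₀ ↦ ?_) baer_prufer he (fun _ _ ↦ torsionBySet_span_prufer_eq_bot) j
  obtain ⟨p, hp, rfl⟩ := (Ideal.isPrime_int_iff.mp hJ).resolve_left hJ₀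
  exact ⟨⟨p, hp⟩, rfl⟩

end Divisible

/-- If `D` is a divisible abelian group of cardinality `λ` (infinite) and `Q_λ` embeds
into `D`, then `D ≅ Q_λ`. -/
theorem divisible_iso_QLambda_of_embedding
    (lam : Cardinal.{u}) (hlam : Cardinal.aleph0 ≤ lam)
    (D : Type u) [AddCommGroup D]
    (hdiv : ∀ d : D, ∀ n : ℕ, 1 ≤ n → ∃ x : D, n • x = d)
    (hcard : Cardinal.mk D = lam)
    (f : QLambda lam →+ D) (hf : Function.Injective f) :
    Nonempty (D ≃+ QLambda lam) := by
  have hD : Module.Baer ℤ D := baer_int_of_nsmul_surjective fun n hn d ↦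
    hdiv d n (Nat.one_le_iff_ne_zero.mpr hn)
  obtain ⟨j⟩ : Nonempty (D ↪ lam.out) := by
    rw [← Cardinal.le_def, Cardinal.mk_out, hcard]
  obtain ⟨g, hg⟩ := exists_injective_linearMap_QLambda j
  obtain ⟨e⟩ := nonempty_linearEquiv_of_injective_of_injective hD (baer_QLambda lam) hg
    (g := f.toIntLinearMap) hf
  exact ⟨e.toAddEquiv⟩
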